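/- Let c and d be integers and let r be a positive integer. If |c + 11d| < 11^{2r-1} then μ_{2r-1} = ⌈(11c + d)/24⌉ + ω(c,d), and if |c + 11d| < 11^{2r} then μ_{2r} = ⌈(c + 11d)/24⌉ + ω(c,d). -/

import Mathlib

/-!
Put `x = c + 11d` and `y = 11c + d`, and let `z_i` be `x` for even `i` and `y` for odd `i`. Composing
the nested ceilings shows that `μ_i` is the ceiling of `z_i / 24 - x / (24 * 11^i)`; this is proved,
cleared of denominators, in `muSeq_bounds`, by induction from the identity
`120 λ_i = 11 z_{i+1} - z_i`. When `|x| < 11^i` the correction `x / (24 * 11^i)` has absolute value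
below `1/24`, so it changes the ceiling of `z_i / 24` only if `24 ∣ z_i` and `x < 0`, in which case
the ceiling goes up by one (`eq_ceil_add_omega`). Since `y = 11x - 120d`, the conditions `24 ∣ x` and
`24 ∣ y` agree, so that this increment is `ω(c,d)` for both parities.
-/



/-- `λ_i`: equal to `c` for even `i` and `d` for odd `i`. -/
def lamSeq (c d : ℤ) (i : ℕ) : ℤ := if i % 2 = 0 then c else d

/-- `μ_i`: defined by `μ_0 = 0` and `μ_i = ⌈(5 λ_{i-1} + μ_{i-1}) / 11⌉`. -/
def muSeq (c d : ℤ) : ℕ → ℤ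
  | 0 => 0
  | i + 1 => ⌈((5 * lamSeq c d i + muSeq c d i : ℤ) : ℚ) / 11⌉

/-- `ω(c,d) = 1` if `c + 11d < 0` and `24 ∣ c + 11d`, and `ω(c,d) = 0` otherwise. -/
def omega (c d : ℤ) : ℤ := if c + 11 * d < 0 ∧ (24 : ℤ) ∣ (c + 11 * d) then 1 else 0

/-- The numerator of the limiting value `z_i / 24` of `μ_i` before rounding. -/
def limNum (c d : ℤ) (i : ℕ) : ℤ := if i % 2 = 0 then c + 11 * d else 11 * c + d

theorem limNum_succ (c d : ℤ) (i : ℕ) :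
    120 * lamSeq c d i = 11 * limNum c d (i + 1) - limNum c d i := by
  unfold lamSeq limNum
  rcases Nat.mod_two_eq_zero_or_one i with h | h
  · have h' : (i + 1) % 2 = 1 := by omega
    simp only [h, h', if_true, one_ne_zero, if_false]
    ring
  · have h' : (i + 1) % 2 = 0 := by omega
    simp only [h, h', if_true, one_ne_zero, if_false]
    ring

theorem dvd_limNum_iff (c d : ℤ) (i : ℕ) :
    (24 : ℤ) ∣ limNum c d i ↔ (24 : ℤ) ∣ c + 11 * d := by
  unfold limNum
  split_ifs <;> omega

theorem muSeq_succ_bounds (c d : ℤ) (i : ℕ) :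
    0 ≤ 11 * muSeq c d (i + 1) - (5 * lamSeq c d i + muSeq c d i) ∧
      11 * muSeq c d (i + 1) - (5 * lamSeq c d i + muSeq c d i) ≤ 10 := by
  have h : muSeq c d (i + 1) = ⌈((5 * lamSeq c d i + muSeq c d i : ℤ) : ℚ) / 11⌉ := rfl
  generalize 5 * lamSeq c d i + muSeq c d i = s at h ⊢
  obtain ⟨h1, h2⟩ := Int.ceil_eq_iff.mp h.symm
  rw [lt_div_iff₀ (by norm_num)] at h1
  rw [div_le_iff₀ (by norm_num)] at h2
  have h1' : (muSeq c d (i + 1) - 1) * 11 < s := by exact_mod_cast h1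
  have h2' : s ≤ muSeq c d (i + 1) * 11 := by exact_mod_cast h2
  omega

/-- The assertion `μ_i = ⌈z_i / 24 - x / (24 * 11^i)⌉` with denominators cleared. The upper bound
`24 * (11^i - 1)`, in place of `< 24 * 11^i`, holds because the quantity is a multiple of `24`. -/
theorem muSeq_bounds (c d : ℤ) (i : ℕ) :
    0 ≤ 11 ^ i * (24 * muSeq c d i - limNum c d i) + (c + 11 * d) ∧
      11 ^ i * (24 * muSeq c d i - limNum c d i) + (c + 11 * d) ≤ 24 * (11 ^ i - 1) := by
  induction i with
  | zero => simp [muSeq, limNum]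
  | succ i ih =>
    obtain ⟨h1, h2⟩ := muSeq_succ_bounds c d i
    have hz := limNum_succ c d i
    have hN : (0 : ℤ) < 11 ^ i := by positivity
    have key : (11 : ℤ) ^ (i + 1) * (24 * muSeq c d (i + 1) - limNum c d (i + 1)) =
        24 * (11 ^ i * (11 * muSeq c d (i + 1) - (5 * lamSeq c d i + muSeq c d i))) +
          11 ^ i * (24 * muSeq c d i - limNum c d i) := by
      rw [pow_succ]
      linear_combination (11 : ℤ) ^ i * hz
    have h3 := mul_nonneg hN.le h1
    have h4 := mul_le_mul_of_nonneg_left h2 hN.le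
    rw [key, pow_succ]
    constructor <;> linarith [ih.1, ih.2]

theorem eq_ceil_add_omega (c d : ℤ) (i : ℕ) (hx : |c + 11 * d| < 11 ^ i) :
    muSeq c d i = ⌈((limNum c d i : ℤ) : ℚ) / 24⌉ + omega c d := by
  obtain ⟨h1, h2⟩ := muSeq_bounds c d i
  have hdvd := dvd_limNum_iff c d i
  obtain ⟨hx1, hx2⟩ := abs_lt.mp hx
  have hN : (0 : ℤ) < 11 ^ i := by positivity
  generalize muSeq c d i = m at *
  generalize limNum c d i = z at *
  generalize (11 : ℤ) ^ i = N at *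
  -- `24 * m - z` lies in `[0, 24]`; its endpoints force `0 ≤ x` and `x < 0` respectively.
  have hlo : 0 ≤ 24 * m - z := by
    by_contra! h
    nlinarith
  have hhi : 24 * m - z ≤ 24 := by
    by_contra! h
    nlinarith
  have hzero : 24 * m - z = 0 → 0 ≤ c + 11 * d := fun h => by
    rw [h] at h1; linarith
  have htop : 24 * m - z = 24 → c + 11 * d < 0 := fun h => by
    rw [h] at h2; linarith
  have hceil : ⌈(z : ℚ) / 24⌉ = m - omega c d := by
    rw [Int.ceil_eq_iff, lt_div_iff₀ (by norm_num), div_le_iff₀ (by norm_num)]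
    have : (m - omega c d - 1) * 24 < z ∧ z ≤ (m - omega c d) * 24 := by
      unfold omega
      split_ifs <;> omega
    exact_mod_cast this
  rw [hceil]; ring

theorem stmt18 (c d : ℤ) (r : ℕ) (hr : 0 < r) :
    (|c + 11 * d| < 11 ^ (2 * r - 1) →
        muSeq c d (2 * r - 1) = ⌈((11 * c + d : ℤ) : ℚ) / 24⌉ + omega c d) ∧
    (|c + 11 * d| < 11 ^ (2 * r) →
        muSeq c d (2 * r) = ⌈((c + 11 * d : ℤ) : ℚ) / 24⌉ + omega c d) := by
  have hodd : limNum c d (2 * r - 1) = 11 * c + d := if_neg (by omega)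
  have heven : limNum c d (2 * r) = c + 11 * d := if_pos (by omega)
  exact ⟨fun h => hodd ▸ eq_ceil_add_omega c d _ h, fun h => heven ▸ eq_ceil_add_omega c d _ h⟩
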